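/- arXiv:2509.09980 — 2 statements merged into one kernel-verified Lean document; each statement's English description precedes it below -/
import Mathlib

section
/- Let S be a commutative ring, and let I and J be ideals of a polynomial ring S over a field of characteristic p > 0. Then (I^[p] : I) ∩ (J^[p] : J) ⊆ ((I ∩ J)^[p] : (I ∩ J)), where K^[p] denotes the ideal generated by p-th powers of elements (equivalently, of generators) of K. -/
open MvPolynomial

/-!
Frobenius on `MvPolynomial σ k` is flat, so Frobenius powers commute with finite intersections:
`I^[p] ∩ J^[p] = (I ∩ J)^[p]`. If `s * I ⊆ I^[p]` and `s * J ⊆ J^[p]`, then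
`s * (I ∩ J) ⊆ I^[p] ∩ J^[p]`, and the inclusion of colon ideals follows.

Flatness is used through an explicit dual basis: if `β` is a basis of `k` over `k ^ p`, then the
products `β i * X ^ r`, where all exponents in `r` are less than `p`, form a basis of the
polynomial ring over its subring of `p`-th powers (`HasFrobeniusDualBasis.mvPolynomial`).
A polynomial lies in `K^[p]` if and only if its coordinates in such a basis are `p`-th powers of
elements of `K`, and this condition is visibly compatible with intersections
(`inf_frobeniusPower_le`).
-/

/-- The `p`-th Frobenius power of an ideal: the ideal generated by `p`-th powers of its
elements. -/
def frobeniusPower {S : Type*} [CommRing S] (K : Ideal S) (p : ℕ) : Ideal S :=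
  Ideal.span ((fun f => f ^ p) '' (K : Set S))

/-- A dual basis for a ring `R` regarded as a module over itself via `x ↦ x ^ p`: coordinates
`c y`, finitely many of them nonzero, satisfying `c (x ^ p * y) = x • c y`, together with generators
`β i` such that `y = ∑ i, (c y i) ^ p * β i`. The coordinate maps are bundled as a single additive
map into `ι →₀ R`; existence says that `R` is projective over itself via Frobenius when `R` has
prime characteristic `p`. -/
def HasFrobeniusDualBasis.{u, v} (R : Type u) [CommRing R] (p : ℕ) : Prop :=
  ∃ (ι : Type v) (c : R →+ (ι →₀ R)) (β : ι → R),
    (∀ x y, c (x ^ p * y) = x • c y) ∧ ∀ y, (c y).sum (fun i a => a ^ p * β i) = y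

lemma hasFrobeniusDualBasis_field.{u} (k : Type u) [Field k] (p : ℕ) [ExpChar k p] :
    HasFrobeniusDualBasis.{u, u} k p := by
  -- `AdjoinPthRoots k` is `k` as a vector space over itself via Frobenius.
  let e := AdjoinPthRoots.root k
  let b := Module.Basis.ofVectorSpace k (AdjoinPthRoots k)
  refine ⟨_, b.repr.toLinearMap.toAddMonoidHom.comp e.toRingHom.toAddMonoidHom,
    fun i => e.symm (b i), fun x y => ?_, fun y => ?_⟩
  · have : e (x ^ p * y) = x • e y := by
      rw [map_mul, map_pow, AdjoinPthRoots.root_pow, Algebra.smul_def]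
    exact (congrArg b.repr this).trans (map_smul b.repr x (e y))
  · apply e.injective
    change e ((b.repr (e y)).sum _) = _
    rw [map_finsuppSum]
    simp only [map_mul, map_pow, RingEquiv.apply_symm_apply]
    conv_rhs => rw [← b.linearCombination_repr (e y), Finsupp.linearCombination_apply]
    refine Finsupp.sum_congr fun i _ => ?_
    rw [AdjoinPthRoots.root_pow, Algebra.smul_def]

section Coordinates

variable {k σ ι : Type*} [CommRing k]

/-- The exponent vector `m` reduced modulo `p`. -/
noncomputable def expMod (p : ℕ) (m : σ →₀ ℕ) : σ →₀ ℕ := m.mapRange (· % p) (Nat.zero_mod p)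

/-- The entrywise quotient of the exponent vector `m` by `p`. -/
noncomputable def expDiv (p : ℕ) (m : σ →₀ ℕ) : σ →₀ ℕ := m.mapRange (· / p) (Nat.zero_div p)

lemma expMod_add_smul (p : ℕ) (u m : σ →₀ ℕ) : expMod p (p • u + m) = expMod p m := by
  ext; simp [expMod]

lemma expDiv_add_smul {p : ℕ} (hp : 0 < p) (u m : σ →₀ ℕ) :
    expDiv p (p • u + m) = u + expDiv p m := by
  ext; simp [expDiv, Nat.mul_add_div hp]

lemma smul_expDiv_add_expMod (p : ℕ) (m : σ →₀ ℕ) : p • expDiv p m + expMod p m = m := by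
  ext; simp [expDiv, expMod, Nat.div_add_mod]

/-- Coordinates of a polynomial with respect to the products `β i * X ^ r`, built from coordinates
`c` on the coefficient ring: the monomial `a * X ^ m` has coordinate `(c a i) * X ^ (m / p)` at
`(i, m mod p)`. The index `r` ranges over all exponent vectors; coordinates at vectors with an entry
at least `p` vanish. -/
noncomputable def polyCoord (p : ℕ) (c : k →+ (ι →₀ k)) :
    MvPolynomial σ k →+ (ι × (σ →₀ ℕ) →₀ MvPolynomial σ k) :=
  (Finsupp.liftAddHom fun m => (Finsupp.liftAddHom fun i =>
    (Finsupp.singleAddHom (i, expMod p m)).comp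
      (monomial (R := k) (expDiv p m)).toAddMonoidHom).comp c).comp
    AddMonoidAlgebra.coeffAddEquiv.toAddMonoidHom

lemma polyCoord_monomial (p : ℕ) (c : k →+ (ι →₀ k)) (m : σ →₀ ℕ) (a : k) :
    polyCoord p c (monomial m a) =
      (c a).sum fun i x => Finsupp.single (i, expMod p m) (monomial (expDiv p m) x) := by
  change Finsupp.liftAddHom _ (Finsupp.single m a) = _
  rw [Finsupp.liftAddHom_apply_single]
  rfl

lemma polyCoord_pow_mul {p : ℕ} (hp : p.Prime) [CharP k p] {c : k →+ (ι →₀ k)}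
    (hc : ∀ x y, c (x ^ p * y) = x • c y) (g f : MvPolynomial σ k) :
    polyCoord p c (g ^ p * f) = g • polyCoord p c f := by
  have : Fact p.Prime := ⟨hp⟩
  induction g using MvPolynomial.induction_on' with
  | add g₁ g₂ h₁ h₂ => rw [add_pow_char, add_mul, map_add, h₁, h₂, add_smul]
  | monomial u x =>
    induction f using MvPolynomial.induction_on' with
    | add f₁ f₂ h₁ h₂ => rw [mul_add, map_add, h₁, h₂, map_add, smul_add]
    | monomial m a =>
      rw [monomial_pow, monomial_mul, polyCoord_monomial, polyCoord_monomial, hc,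
        expMod_add_smul, expDiv_add_smul hp.pos, Finsupp.sum_smul_index (by simp),
        Finsupp.smul_sum]
      refine Finsupp.sum_congr fun i _ => ?_
      rw [Finsupp.smul_single, smul_eq_mul, monomial_mul]

lemma sum_polyCoord {p : ℕ} (hp : p.Prime) [CharP k p] {c : k →+ (ι →₀ k)} {β : ι → k}
    (hβ : ∀ y, (c y).sum (fun i a => a ^ p * β i) = y) (f : MvPolynomial σ k) :
    (polyCoord p c f).sum (fun j a => a ^ p * monomial j.2 (β j.1)) = f := by
  have : Fact p.Prime := ⟨hp⟩
  have hzero (j : ι × (σ →₀ ℕ)) : (0 : MvPolynomial σ k) ^ p * monomial j.2 (β j.1) = 0 := by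
    rw [zero_pow hp.ne_zero, zero_mul]
  have hadd (j : ι × (σ →₀ ℕ)) (a b : MvPolynomial σ k) : (a + b) ^ p * monomial j.2 (β j.1) =
      a ^ p * monomial j.2 (β j.1) + b ^ p * monomial j.2 (β j.1) := by
    rw [add_pow_char, add_mul]
  induction f using MvPolynomial.induction_on' with
  | add f₁ f₂ h₁ h₂ => rw [map_add, Finsupp.sum_add_index' hzero hadd, h₁, h₂]
  | monomial m a =>
    rw [polyCoord_monomial, Finsupp.sum_sum_index hzero hadd]
    conv_rhs => rw [← hβ a, map_finsuppSum]
    refine Finsupp.sum_congr fun i _ => ?_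
    rw [Finsupp.sum_single_index (hzero _), monomial_pow, monomial_mul, smul_expDiv_add_expMod]

end Coordinates

lemma HasFrobeniusDualBasis.mvPolynomial.{u, v, w} {k : Type u} [CommRing k] {σ : Type w} {p : ℕ}
    (hp : p.Prime) [CharP k p] (h : HasFrobeniusDualBasis.{u, v} k p) :
    HasFrobeniusDualBasis.{max u w, max v w} (MvPolynomial σ k) p := by
  obtain ⟨ι, c, β, hc, hβ⟩ := h
  exact ⟨ι × (σ →₀ ℕ), polyCoord p c, fun j => monomial j.2 (β j.1),
    polyCoord_pow_mul hp hc, sum_polyCoord hp hβ⟩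

lemma coord_mem_of_mem_frobeniusPower {R ι : Type*} [CommRing R] {p : ℕ} {c : R →+ (ι →₀ R)}
    (hc : ∀ x y, c (x ^ p * y) = x • c y) {K : Ideal R} {f : R} (hf : f ∈ frobeniusPower K p)
    (i : ι) : c f i ∈ K := by
  -- The coordinates are not `R`-linear, so the induction has to carry an arbitrary multiplier.
  suffices ∀ a, c (a * f) i ∈ K by simpa using this 1
  unfold frobeniusPower at hf
  induction hf using Submodule.span_induction with
  | mem x hx =>
    obtain ⟨g, hg, rfl⟩ := hx
    intro a
    simpa [mul_comm a, hc] using K.mul_mem_right (c a i) hg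
  | zero => simp
  | add x y _ _ hx hy => exact fun a => by simpa [mul_add] using K.add_mem (hx a) (hy a)
  | smul b x _ hx => exact fun a => by simpa [mul_assoc] using hx (a * b)

lemma inf_frobeniusPower_le.{u, v} {R : Type u} [CommRing R] {p : ℕ}
    (h : HasFrobeniusDualBasis.{u, v} R p) (I J : Ideal R) :
    frobeniusPower I p ⊓ frobeniusPower J p ≤ frobeniusPower (I ⊓ J) p := by
  obtain ⟨ι, c, β, hc, hβ⟩ := h
  rintro f ⟨hI, hJ⟩
  rw [← hβ f]
  refine Ideal.sum_mem _ fun i _ => Ideal.mul_mem_right _ _ (Ideal.subset_span ⟨_, ?_, rfl⟩)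
  exact ⟨coord_mem_of_mem_frobeniusPower hc hI i, coord_mem_of_mem_frobeniusPower hc hJ i⟩

/-- For ideals `I`, `J` of a polynomial ring in finitely many variables over a field of
prime characteristic `p > 0`, `(I^[p] : I) ∩ (J^[p] : J) ⊆ ((I ∩ J)^[p] : (I ∩ J))`. -/
theorem stmt1 {k : Type*} [Field k] {σ : Type*} [Finite σ] (p : ℕ) (hp : p.Prime)
    [CharP k p] (I J : Ideal (MvPolynomial σ k)) :
    Submodule.colon (frobeniusPower I p) I ⊓ Submodule.colon (frobeniusPower J p) J ≤
      Submodule.colon (frobeniusPower (I ⊓ J) p) (I ⊓ J) := by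
  have : ExpChar k p := .prime hp
  have h := (hasFrobeniusDualBasis_field k p).mvPolynomial (σ := σ) hp
  rintro s ⟨hI, hJ⟩
  rw [SetLike.mem_coe, Submodule.mem_colon] at hI hJ
  rw [Submodule.mem_colon]
  intro f hf
  exact inf_frobeniusPower_le h I J ⟨hI f hf.1, hJ f hf.2⟩
end

section
/- Let S be a polynomial ring over a field of characteristic p > 0, and let I be an ideal generated by a regular sequence f₁,…,f_r. Set ω = f₁⋯f_r. Then (I^[q] : I) = (ω^{q−1}) + I^[q] for every q = p^e. -/
open MvPolynomial

/-!
The statement holds for every `n ≥ 1` in place of `q`, over any Noetherian ring: neither the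
characteristic nor the Frobenius is needed.

The inclusion `⊇` is clear, since `f_i` divides `ω`. For `⊆`, membership is checked after
localizing at each maximal ideal. If some `f_i` becomes a unit, then so does `f_i ^ n`, and
`(f_i ^ n)_i` is everything. Otherwise all the `f_i` lie in the maximal ideal of a Noetherian local
ring, so every permutation of them is weakly regular (`PermRegular.of_isWeaklyRegular`). The proof
is then an induction on the sequence modulo an auxiliary ideal `J`: replacing `J` by `J + (f₁ ^ n)`
keeps the remaining elements permutably regular (`PermRegular.tail`). With `ω' = f₂ ⋯ f_r`, the
induction hypothesis reduces to the case of `ω' ^ (n - 1) y` with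
`f₁ ω' ^ (n - 1) y ∈ J + (f₁ ^ n, …, f_r ^ n)`. Cancelling `ω' ^ (n - 1)`
(`PermRegular.mem_of_prod_pow_mul_mem`) gives `f₁ y ∈ J + (f₁ ^ n) + (f₂, …, f_r)`, and
`f₁` is regular modulo `J + (f₂, …, f_r)`, so `y ∈ (f₁ ^ (n - 1)) + J + (f₂, …, f_r)`, which is
what is needed because `ω' ^ (n - 1) f_i ∈ (f₂ ^ n, …, f_r ^ n)` for `i ≥ 2`.
-/

namespace ColonFrobenius

open Ideal

variable {R : Type*} [CommRing R]

/-- The list `L` is permutably weakly regular modulo `J`: each term `g` of each permutation of `L`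
is a nonzerodivisor modulo `J` and the terms `A` preceding `g`. -/
def PermRegular (J : Ideal R) (L : List R) : Prop :=
  ∀ (A : List R) (g : R) (B : List R), L.Perm (A ++ g :: B) →
    ∀ y, g * y ∈ ofList A ⊔ J → y ∈ ofList A ⊔ J

/-- If `f` is regular modulo `J` and `g` is regular modulo `J + (f)`, then `g` is regular modulo
`J + (f ^ n)`. -/
lemma mem_of_mul_mem_span_pow_sup {J : Ideal R} {f g : R}
    (hf : ∀ y, f * y ∈ J → y ∈ J)
    (hg : ∀ y, g * y ∈ span {f} ⊔ J → y ∈ span {f} ⊔ J) (n : ℕ) :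
    ∀ y, g * y ∈ span {f ^ n} ⊔ J → y ∈ span {f ^ n} ⊔ J := by
  induction n with
  | zero => intro y _; simp
  | succ n ih =>
    intro y hy
    obtain ⟨a, j, hj, h⟩ := mem_span_singleton_sup.1 hy
    obtain ⟨b, j', hj', rfl⟩ := mem_span_singleton_sup.1
      (hg y (mem_span_singleton_sup.2 ⟨a * f ^ n, j, hj, by rw [← h]; ring⟩))
    have h1 : g * b - a * f ^ n ∈ J := by
      apply hf
      have : f * (g * b - a * f ^ n) = j - g * j' := by linear_combination -h
      rw [this]
      exact J.sub_mem hj (J.mul_mem_left _ hj')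
    obtain ⟨c, j₂, hj₂, rfl⟩ := mem_span_singleton_sup.1
      (ih b (mem_span_singleton_sup.2 ⟨a, _, h1, by ring⟩))
    exact mem_span_singleton_sup.2
      ⟨c, f * j₂ + j', J.add_mem (J.mul_mem_left _ hj₂) hj', by ring⟩

namespace PermRegular

variable {J : Ideal R} {f : R} {L : List R}

/-- The head of the list is regular modulo all the other terms. -/
lemma head (h : PermRegular J (f :: L)) (y : R) (hy : f * y ∈ ofList L ⊔ J) :
    y ∈ ofList L ⊔ J :=
  h L f [] (List.perm_append_singleton f L).symm y hy

/-- Modulo `J + (f ^ n)`, the list without its head `f` is still permutably regular: for a term `g`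
preceded by `A`, both `f` modulo `J + (A)` and `g` modulo `J + (A) + (f)` are regular. -/
lemma tail (h : PermRegular J (f :: L)) (n : ℕ) : PermRegular (span {f ^ n} ⊔ J) L := by
  intro A g B hp y hy
  rw [sup_left_comm] at hy ⊢
  refine mem_of_mul_mem_span_pow_sup (h A f (g :: B) ?_) (fun z hz => ?_) n y hy
  · exact (hp.cons f).trans List.perm_middle.symm
  · have := h (f :: A) g B (hp.cons f) z
    rw [ofList_cons, sup_assoc] at this
    exact this hz

lemma of_isWeaklyRegular [IsLocalRing R] [IsNoetherianRing R]
    (h : RingTheory.Sequence.IsWeaklyRegular R L)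
    (hL : ∀ r ∈ L, r ∈ IsLocalRing.maximalIdeal R) : PermRegular ⊥ L := by
  intro A g B hp y hy
  have h' := IsLocalRing.isWeaklyRegular_of_perm_of_subset_maximalIdeal h hp hL
  have h1 := h'.regular_mod_prev A.length (by simp)
  rw [isSMulRegular_quotient_iff_mem_of_smul_mem] at h1
  simpa using h1 y (by simpa using hy)

end PermRegular

lemma prod_pow_mul_mem_of_mem (L : List R) (N : ℕ) {g : R} (hg : g ∈ L) :
    L.prod ^ N * g ∈ ofList (L.map (· ^ (N + 1))) := by
  obtain ⟨c, hc⟩ := List.dvd_prod hg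
  have : L.prod ^ N * g = c ^ N * g ^ (N + 1) := by rw [hc]; ring
  rw [this]
  exact mul_mem_left _ _ (subset_span (List.mem_map.2 ⟨g, hg, rfl⟩))

lemma prod_pow_mul_mem (L : List R) (N : ℕ) {J : Ideal R} {y : R} (hy : y ∈ ofList L ⊔ J) :
    L.prod ^ N * y ∈ ofList (L.map (· ^ (N + 1))) ⊔ J := by
  have : ofList L ⊔ J ≤
      Submodule.comap (LinearMap.mulLeft R (L.prod ^ N)) (ofList (L.map (· ^ (N + 1))) ⊔ J) := by
    refine sup_le (span_le.2 fun g hg => ?_) fun j hj => ?_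
    · exact mem_sup_left (prod_pow_mul_mem_of_mem L N hg)
    · exact mem_sup_right (J.mul_mem_left _ hj)
  exact this hy

/-- With `ω = L.prod`, `(J + (f_i ^ (N + 1)) : ω ^ N) ⊆ J + (f_i)`. -/
lemma PermRegular.mem_of_prod_pow_mul_mem (N : ℕ) (L : List R) :
    ∀ {J : Ideal R}, PermRegular J L → ∀ y,
      L.prod ^ N * y ∈ ofList (L.map (· ^ (N + 1))) ⊔ J → y ∈ ofList L ⊔ J := by
  induction L with
  | nil => intro J _ y hy; simpa using hy
  | cons f L ih =>
    intro J h y hy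
    rw [List.map_cons, ofList_cons, sup_assoc, sup_left_comm] at hy
    have h1 := ih (h.tail (N + 1)) (f ^ N * y) (by
      convert hy using 1; rw [List.prod_cons]; ring)
    rw [sup_left_comm] at h1
    obtain ⟨a, j, hj, e⟩ := mem_span_singleton_sup.1 h1
    have h2 : ∀ M z, f ^ M * z ∈ ofList L ⊔ J → z ∈ ofList L ⊔ J := by
      intro M
      induction M with
      | zero => intro z hz; simpa using hz
      | succ M ihM => intro z hz; exact h.head _ (ihM _ (by convert hz using 1; ring))
    have h3 : y - a * f ∈ ofList L ⊔ J := by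
      apply h2 N
      convert hj using 1
      linear_combination -e
    rw [ofList_cons, sup_assoc]
    exact mem_span_singleton_sup.2 ⟨a, _, h3, by ring⟩

/-- The inclusion `(I^[n] : I) ⊆ (ω ^ (n - 1)) + I^[n]`, with `n = N + 1`, modulo `J`. -/
lemma PermRegular.mem_of_forall_mul_mem (N : ℕ) (L : List R) :
    ∀ {J : Ideal R}, PermRegular J L → ∀ a,
      (∀ g ∈ L, g * a ∈ ofList (L.map (· ^ (N + 1))) ⊔ J) →
      a ∈ span {L.prod ^ N} ⊔ (ofList (L.map (· ^ (N + 1))) ⊔ J) := by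
  induction L with
  | nil => intro J _ a _; simp
  | cons f L ih =>
    intro J h a ha
    simp only [List.map_cons, ofList_cons, sup_assoc] at ha ⊢
    rw [sup_left_comm (span {f ^ (N + 1)})] at ha ⊢
    obtain ⟨y, j, hj, rfl⟩ := mem_span_singleton_sup.1
      (ih (h.tail (N + 1)) a fun g hg => ha g (List.mem_cons_of_mem _ hg))
    have h1 : L.prod ^ N * (f * y) ∈ ofList (L.map (· ^ (N + 1))) ⊔ (span {f ^ (N + 1)} ⊔ J) := by
      have := sub_mem (ha f List.mem_cons_self) (mul_mem_left _ f hj)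
      convert this using 1; ring
    have h2 := PermRegular.mem_of_prod_pow_mul_mem N L (h.tail (N + 1)) _ h1
    rw [sup_left_comm] at h2
    obtain ⟨m, i, hi, e⟩ := mem_span_singleton_sup.1 h2
    have h3 : y - m * f ^ N ∈ ofList L ⊔ J := by
      apply h.head
      convert hi using 1
      linear_combination -e
    have h4 := prod_pow_mul_mem L N h3
    refine mem_span_singleton_sup.2 ⟨m, L.prod ^ N * (y - m * f ^ N) + j, add_mem ?_ hj, ?_⟩
    · have hJ : J ≤ span {f ^ (N + 1)} ⊔ J := le_sup_right
      exact (sup_le_sup_left hJ (ofList (L.map (· ^ (N + 1))))) h4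
    · rw [List.prod_cons]; ring

/-- The inclusion `(I^[n] : I) ⊆ (ω ^ (n - 1)) + I^[n]`, with `n = N + 1`, for a weakly regular
sequence in a Noetherian ring, by reduction to the localizations at maximal ideals. -/
lemma mem_of_forall_mul_mem [IsNoetherianRing R] {L : List R}
    (h : RingTheory.Sequence.IsWeaklyRegular R L) (N : ℕ) (a : R)
    (ha : ∀ g ∈ L, g * a ∈ ofList (L.map (· ^ (N + 1)))) :
    a ∈ span {L.prod ^ N} ⊔ ofList (L.map (· ^ (N + 1))) := by
  refine Ideal.mem_of_localization_maximal fun P hP => ?_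
  set φ := algebraMap R (Localization.AtPrime P)
  have hmap : (L.map (· ^ (N + 1))).map φ = (L.map φ).map (· ^ (N + 1)) := by
    simp [Function.comp_def]
  rw [Ideal.map_sup, map_ofList, hmap, Ideal.map_span, Set.image_singleton, map_pow,
    map_list_prod]
  by_cases hL : ∀ r ∈ L, r ∈ P
  · have : IsNoetherianRing (Localization.AtPrime P) :=
      IsLocalization.isNoetherianRing P.primeCompl _ inferInstance
    have hreg := PermRegular.of_isWeaklyRegular
      (h.of_isLocalization (Localization.AtPrime P) P.primeCompl) (by
        intro r hr
        obtain ⟨r, hr', rfl⟩ := List.mem_map.1 hr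
        exact (IsLocalization.AtPrime.to_map_mem_maximal_iff _ P r).2 (hL r hr'))
    have := hreg.mem_of_forall_mul_mem N _ (φ a) (by
      intro g hg
      obtain ⟨g, hg', rfl⟩ := List.mem_map.1 hg
      have := Ideal.mem_map_of_mem φ (ha g hg')
      rw [map_ofList, hmap, map_mul] at this
      simpa using this)
    simpa using this
  · push Not at hL
    obtain ⟨r, hr, hrP⟩ := hL
    have hu : IsUnit (φ r) := IsLocalization.map_units _ (⟨r, hrP⟩ : P.primeCompl)
    have : ofList ((L.map φ).map (· ^ (N + 1))) = ⊤ :=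
      Ideal.eq_top_of_isUnit_mem _ (subset_span
        (List.mem_map.2 ⟨φ r, List.mem_map.2 ⟨r, hr, rfl⟩, rfl⟩)) (hu.pow (N + 1))
    rw [this, sup_top_eq]
    trivial

end ColonFrobenius

/-- Let `S` be a polynomial ring in finitely many variables over a field of characteristic
`p > 0`, and let `I` be an ideal generated by a regular sequence `f₁, …, f_r`, with
`ω = f₁ ⋯ f_r`.  Then `(I^[q] : I) = (ω^{q-1}) + I^[q]` for every `q = p^e`. -/
theorem stmt15 {k : Type*} [Field k] {σ : Type*} [Finite σ] (p : ℕ) (hp : p.Prime)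
    [CharP k p] (rs : List (MvPolynomial σ k))
    (hreg : RingTheory.Sequence.IsRegular (MvPolynomial σ k) rs)
    (e : ℕ) (he : 1 ≤ e) :
    Submodule.colon (Ideal.span ((fun f => f ^ p ^ e) '' {x | x ∈ rs}))
        (Ideal.span {x | x ∈ rs}) =
      Ideal.span {rs.prod ^ (p ^ e - 1)} +
        Ideal.span ((fun f => f ^ p ^ e) '' {x | x ∈ rs}) := by
  obtain ⟨N, hN⟩ : ∃ N, p ^ e = N + 1 :=
    Nat.exists_eq_succ_of_ne_zero (pow_ne_zero e hp.ne_zero)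
  have hspan : Ideal.span ((fun f => f ^ (N + 1)) '' {x | x ∈ rs}) =
      Ideal.ofList (rs.map (· ^ (N + 1))) :=
    congrArg Ideal.span (Set.ext fun _ => List.mem_map.symm)
  rw [hN, hspan, Nat.add_sub_cancel, Submodule.add_eq_sup]
  refine le_antisymm (fun a ha => ?_) (sup_le ?_ ?_)
  · refine ColonFrobenius.mem_of_forall_mul_mem hreg.toIsWeaklyRegular N a fun g hg => ?_
    rw [mul_comm]
    exact Submodule.mem_colon.1 ha g (Ideal.subset_span hg)
  · rw [Ideal.span_singleton_le_iff_mem, Submodule.mem_colon]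
    intro s hs
    simpa using ColonFrobenius.prod_pow_mul_mem rs N (J := ⊥) (y := s) (by simpa using hs)
  · intro a ha
    exact Submodule.mem_colon.2 fun s _ => Ideal.mul_mem_right s _ ha
end
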